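/- arXiv:0810.3892 — 4 statements merged into one kernel-verified Lean document; each statement's English description precedes it below -/
import Mathlib

section
/- Let n ≥ 2 and let τ ∈ Sₙ be the transposition (1 2). Then the action of τ - 1 on the k-th exterior power of the permutation representation ℂⁿ of Sₙ equals the sum over positions 1 ≤ p ≤ k of id ∧ ... ∧ (τ-1) ∧ ... ∧ id (with τ-1 in the p-th factor); that is, τ - 1 acts as a derivation ('Lie-algebra-like' element) on ⋀ᵏ ℂⁿ. -/
open ExteriorAlgebra

/-- The linear action of a permutation `σ` on `ℂⁿ`, permuting coordinates. -/
noncomputable def permLin {n : ℕ} (σ : Equiv.Perm (Fin n)) :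
    (Fin n → ℂ) →ₗ[ℂ] (Fin n → ℂ) :=
  LinearMap.funLeft ℂ ℂ ⇑σ⁻¹

theorem aux_update {M N : Type*} [AddCommGroup M] [Module ℂ M] [AddCommGroup N] [Module ℂ N]
    {k : ℕ} (f : M [⋀^Fin k]→ₗ[ℂ] N) (v : Fin k → M) (c : Fin k → ℂ) (w : M) (a : Fin k)
    (s : Finset (Fin k)) (ha : a ∉ s) :
    f (Function.update (s.piecewise (fun i => v i + c i • w) v) a w)
      = f (Function.update v a w) := by
  induction s using Finset.induction_on with
  | empty => simp
  | insert b s hb ih =>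
    have hab : a ≠ b := fun h => ha (by simp [h])
    have has : a ∉ s := fun h => ha (by simp [h])
    rw [Finset.piecewise_insert, Function.update_comm hab.symm, f.map_update_add,
      f.map_update_smul]
    have h0 : f (Function.update (Function.update (s.piecewise (fun i => v i + c i • w) v) a w)
        b w) = 0 := by
      apply f.map_eq_zero_of_eq _ _ hab
      simp [hab]
    rw [h0, smul_zero, add_zero, ← ih has]
    congr 1
    apply Function.update_eq_self_iff.2
    simp [hab.symm, hb]

theorem aux_sum {M N : Type*} [AddCommGroup M] [Module ℂ M] [AddCommGroup N] [Module ℂ N]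
    {k : ℕ} (f : M [⋀^Fin k]→ₗ[ℂ] N) (v : Fin k → M) (c : Fin k → ℂ) (w : M)
    (s : Finset (Fin k)) :
    f (s.piecewise (fun i => v i + c i • w) v)
      = f v + ∑ p ∈ s, f (Function.update v p (c p • w)) := by
  induction s using Finset.induction_on with
  | empty => simp
  | insert a s ha ih =>
    have h1 : Function.update (s.piecewise (fun i => v i + c i • w) v) a (v a)
        = s.piecewise (fun i => v i + c i • w) v := by
      apply Function.update_eq_self_iff.2
      simp [ha]
    rw [Finset.piecewise_insert, f.map_update_add, f.map_update_smul, aux_update f v c w a s ha,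
      h1, ih, Finset.sum_insert ha, f.map_update_smul]
    abel

/-- Let `τ = (1 2) ∈ Sₙ` act on `ℂⁿ` by permuting coordinates, with `T` the corresponding
linear map.  Then on the `k`-th exterior power the operator `(⋀ᵏτ) - id` acts as a
derivation:  `(⋀ᵏτ)(v₁∧⋯∧v_k) - v₁∧⋯∧v_k = Σ_p v₁∧⋯∧(τ-1)v_p∧⋯∧v_k`. -/
theorem transposition_sub_one_is_lie_algebra_like (n k : ℕ) (hn : 2 ≤ n)
    (T : (Fin n → ℂ) →ₗ[ℂ] (Fin n → ℂ))
    (hT : T = permLin (Equiv.swap (⟨0, by omega⟩ : Fin n) ⟨1, by omega⟩))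
    (v : Fin k → (Fin n → ℂ)) :
    ExteriorAlgebra.map T (ιMulti ℂ k v) - ιMulti ℂ k v
      = ∑ p : Fin k, ιMulti ℂ k (Function.update v p (T (v p) - v p)) := by
  have key : ∀ x : Fin n → ℂ, T x - x = (x ⟨1, by omega⟩ - x ⟨0, by omega⟩) •
      (Pi.single (⟨0, by omega⟩ : Fin n) (1 : ℂ) - Pi.single (⟨1, by omega⟩ : Fin n) (1 : ℂ)) := by
    intro x
    subst hT
    ext i
    simp only [permLin, Pi.sub_apply, LinearMap.funLeft_apply, Equiv.swap_inv, Pi.smul_apply,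
      smul_eq_mul, Pi.single_apply, Equiv.swap_apply_def]
    split_ifs with h1 h2 h3
    all_goals simp_all
  have h := aux_sum (ιMulti ℂ k) v
    (fun p => v p ⟨1, by omega⟩ - v p ⟨0, by omega⟩)
    (Pi.single (⟨0, by omega⟩ : Fin n) (1 : ℂ) - Pi.single (⟨1, by omega⟩ : Fin n) (1 : ℂ))
    Finset.univ
  simp only [← key, Finset.piecewise_univ, add_sub_cancel] at h
  rw [ExteriorAlgebra.map_apply_ιMulti, sub_eq_iff_eq_add', ← h]
  rfl
end

section
/- For every n-cycle σ in the symmetric group Sₙ and every 0 ≤ k ≤ n-1, the character of σ on the irreducible representation ⋀ᵏ V, where V is the (n-1)-dimensional standard representation of Sₙ, equals (-1)ᵏ. -/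
open Finset ExteriorAlgebra

/-- The sum-of-coordinates functional on `ℂⁿ`. -/
noncomputable def sumL (n : ℕ) : (Fin n → ℂ) →ₗ[ℂ] ℂ :=
  { toFun := fun x => ∑ i, x i
    map_add' := by intro x y; simp [Finset.sum_add_distrib]
    map_smul' := by intro c x; simp [Finset.mul_sum] }

/-- The standard representation `V = {x ∈ ℂⁿ : Σ xᵢ = 0}` of `Sₙ`. -/
noncomputable def Vsub (n : ℕ) : Submodule ℂ (Fin n → ℂ) := LinearMap.ker (sumL n)

lemma permLin_mem {n : ℕ} (σ : Equiv.Perm (Fin n)) :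
    ∀ x ∈ Vsub n, permLin σ x ∈ Vsub n := by
  intro x hx
  simp only [Vsub, LinearMap.mem_ker] at hx ⊢
  have h : sumL n (permLin σ x) = ∑ i, x (σ⁻¹ i) := rfl
  rw [h, Equiv.sum_comp σ⁻¹ x]
  exact hx

/-- The action of a permutation on `V`. -/
noncomputable def permV {n : ℕ} (σ : Equiv.Perm (Fin n)) : Vsub n →ₗ[ℂ] Vsub n :=
  (permLin σ).restrict (permLin_mem σ)

lemma extMap_mem {n k : ℕ} (f : Vsub n →ₗ[ℂ] Vsub n) :
    ∀ x ∈ ⋀[ℂ]^k (Vsub n), (ExteriorAlgebra.map f).toLinearMap x ∈ ⋀[ℂ]^k (Vsub n) := by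
  intro x hx
  rw [← ExteriorAlgebra.ιMulti_span_fixedDegree] at hx ⊢
  have h2 := Submodule.apply_mem_span_image_of_mem_span
    (ExteriorAlgebra.map f).toLinearMap hx
  refine Submodule.span_mono ?_ h2
  rintro y ⟨z, ⟨vv, rfl⟩, rfl⟩
  exact ⟨f ∘ vv, (ExteriorAlgebra.map_apply_ιMulti f vv).symm⟩

set_option synthInstance.maxHeartbeats 1000000 in
/-- The operator induced on the `k`-th exterior power `⋀ᵏV` by an operator on `V`. -/
noncomputable def extMap (n k : ℕ) (f : Vsub n →ₗ[ℂ] Vsub n) :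
    ⋀[ℂ]^k (Vsub n) →ₗ[ℂ] ⋀[ℂ]^k (Vsub n) :=
  (ExteriorAlgebra.map f).toLinearMap.restrict (extMap_mem f)

lemma aux_esymm (m k : ℕ) (hk : k ≤ m) (ζ : ℂ) (hζ : IsPrimitiveRoot ζ (m+1)) :
    ∑ s ∈ Finset.powersetCard k (Finset.univ : Finset (Fin m)), ∏ j ∈ s, ζ ^ ((j:ℕ)+1) = (-1)^k := by
  have h1 : (∏ j : Fin m, (Polynomial.X - Polynomial.C (ζ ^ ((j:ℕ)+1)))) =
      ∑ i ∈ Finset.range (m+1), (Polynomial.X : Polynomial ℂ)^i := by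
    have h2 := X_pow_sub_C_eq_prod hζ (Nat.succ_pos m) (one_pow (M := ℂ) (m+1))
    rw [Finset.prod_range_succ' , Polynomial.C_1, ← mul_geom_sum, mul_comm] at h2
    have h3 : (Polynomial.X - 1 : Polynomial ℂ) ≠ 0 := Polynomial.X_sub_C_ne_zero (1:ℂ)
    simp only [pow_zero, mul_one, Polynomial.C_1] at h2
    rw [Finset.prod_range] at h2
    exact (mul_right_cancel₀ h3 h2).symm
  have h4 := Multiset.prod_X_sub_C_coeff ((Finset.univ : Finset (Fin m)).val.map
    (fun j : Fin m => ζ ^ ((j:ℕ)+1))) (k := m - k) (by simp)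
  rw [Multiset.map_map, Finset.esymm_map_val] at h4
  have h5 : ((Multiset.map ((fun t => Polynomial.X - Polynomial.C t) ∘
    (fun j : Fin m => ζ ^ ((j:ℕ)+1))) (Finset.univ : Finset (Fin m)).val)).prod =
    ∑ i ∈ Finset.range (m+1), (Polynomial.X : Polynomial ℂ)^i := by
    rw [← h1]; rfl
  rw [h5] at h4
  have h6 : (m - (m - k)) = k := by omega
  simp [Polynomial.coeff_X_pow, h6] at h4
  have h7 : ((-1:ℂ)^k) * (-1)^k = 1 := by rw [← mul_pow]; simp
  linear_combination (-1)^k * (-1:ℂ) * h4 - (∑ s ∈ Finset.powersetCard k (Finset.univ : Finset (Fin m)), ∏ j ∈ s, ζ ^ ((j:ℕ)+1)) * h7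

set_option synthInstance.maxHeartbeats 1000000 in
lemma aux_trace (n k m : ℕ) (f : Vsub n →ₗ[ℂ] Vsub n) (b : Module.Basis (Fin m) ℂ (Vsub n))
    (μ : Fin m → ℂ) (hb : ∀ j, f (b j) = μ j • b j) :
    LinearMap.trace ℂ _ (extMap n k f) =
      ∑ s ∈ Finset.powersetCard k (Finset.univ : Finset (Fin m)), ∏ j ∈ s, μ j := by
  classical
  have h0 : extMap n k f = exteriorPower.map k f := by
    apply exteriorPower.linearMap_ext
    ext v
    simp [extMap, ExteriorAlgebra.map_apply_ιMulti]
    rfl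
  rw [h0, LinearMap.trace_eq_matrix_trace ℂ (b.exteriorPower k), Matrix.trace]
  have h1 : ∀ s : Set.powersetCard (Fin m) k,
      (LinearMap.toMatrix (b.exteriorPower k) (b.exteriorPower k) (exteriorPower.map k f)).diag s
        = ∏ j ∈ s.val, μ j := by
    intro s
    rw [Matrix.diag_apply, LinearMap.toMatrix_apply, exteriorPower.basis_apply,
      exteriorPower.map_apply_ιMulti_family]
    have h2 : exteriorPower.ιMulti_family ℂ k (f ∘ b) s =
        (∏ j ∈ s.val, μ j) • exteriorPower.ιMulti_family ℂ k b s := by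
      unfold exteriorPower.ιMulti_family
      have h3 : (f ∘ b) ∘ (Set.powersetCard.ofFinEmbEquiv.symm s) =
        fun i => μ (Set.powersetCard.ofFinEmbEquiv.symm s i) •
          (b ∘ (Set.powersetCard.ofFinEmbEquiv.symm s)) i := by
        ext1 i; simp [hb]
      rw [h3, AlternatingMap.map_smul_univ]
      congr 1
      rw [Set.powersetCard.ofFinEmbEquiv_symm_apply]
      conv_rhs => rw [← Finset.map_orderEmbOfFin_univ s.val s.prop, Finset.prod_map]
      rfl
    rw [h2]
    simp
  rw [Finset.sum_congr rfl (fun s _ => h1 s)]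
  symm
  apply Finset.sum_subtype (p := fun s => s ∈ Set.powersetCard (Fin m) k) _ _ (fun s => ∏ j ∈ s, μ j)
  intro s
  simp [Set.powersetCard]

lemma aux_eigen {n : ℕ} (σ : Equiv.Perm (Fin n)) (hσ : σ.IsCycle ∧ σ.support = univ) (μ : ℂ)
    (h1 : μ ≠ 1) (hμ : μ ^ n = 1) : Module.End.HasEigenvalue (permV σ) μ := by
  obtain ⟨i0, hi0, -⟩ := hσ.1
  have hn0 : n ≠ 0 := by rintro rfl; exact i0.elim0
  have hμ0 : μ ≠ 0 := by rintro rfl; simp [hn0] at hμ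
  have hord : orderOf σ = n := by rw [hσ.1.orderOf, hσ.2]; simp
  have hσn : σ ^ n = 1 := by
    have h := pow_orderOf_eq_one σ
    rwa [show orderOf σ = n from hord] at h
  let g : ℕ → (Fin n → ℂ) := fun m => (μ⁻¹)^m • permLin (σ ^ m) (Pi.single i0 1)
  have hg : ∀ m, permLin σ (g m) = μ • g (m+1) := by
    intro m
    ext i
    have hc : (σ ^ (m+1))⁻¹ i = (σ ^ m)⁻¹ (σ⁻¹ i) := by
      rw [pow_succ', mul_inv_rev]; rfl
    simp only [g, permLin, map_smul, Pi.smul_apply, LinearMap.funLeft_apply, hc, smul_eq_mul]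
    rw [pow_succ μ⁻¹ m]
    field_simp
  have hgn : g n = g 0 := by simp [g, hσn, hμ]
  let v : Fin n → ℂ := ∑ m ∈ Finset.range n, g m
  have hfv : permLin σ v = μ • v := by
    simp only [v, map_sum, hg, ← Finset.smul_sum]
    congr 1
    have h := Finset.sum_range_succ g n
    rw [Finset.sum_range_succ', hgn] at h
    exact add_right_cancel h
  have hv0 : v i0 = 1 := by
    simp only [v, Finset.sum_apply]
    rw [Finset.sum_eq_single 0]
    · have hc : (σ ^ 0)⁻¹ i0 = i0 := by rw [pow_zero, inv_one]; rfl
      simp only [g, permLin, Pi.smul_apply, LinearMap.funLeft_apply, hc]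
      simp
    · intro m hm hm0
      have : (σ ^ m) i0 ≠ i0 := by
        intro h
        have h2 := (hσ.1.pow_eq_one_iff' hi0).2 h
        have h3 := orderOf_dvd_of_pow_eq_one h2
        rw [hord] at h3
        exact absurd (Nat.le_of_dvd (Nat.pos_of_ne_zero hm0) h3) (by simpa using hm)
      have h4 : ((σ ^ m)⁻¹ : Equiv.Perm (Fin n)) i0 ≠ i0 := by
        intro h; apply this; rw [Equiv.Perm.inv_eq_iff_eq] at h; exact h.symm
      simp only [g, permLin, LinearMap.funLeft_apply, Pi.smul_apply]
      rw [Pi.single_eq_of_ne h4, smul_zero]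
    · simp [hn0]
  have hvV : v ∈ Vsub n := by
    have h2 : sumL n (permLin σ v) = sumL n v := Equiv.sum_comp σ⁻¹ v
    rw [hfv, map_smul, smul_eq_mul] at h2
    have h3 : (μ - 1) * sumL n v = 0 := by linear_combination h2
    exact (mul_eq_zero.1 h3).resolve_left (sub_ne_zero.2 h1)
  apply Module.End.hasEigenvalue_of_hasEigenvector (x := (⟨v, hvV⟩ : Vsub n))
  rw [Module.End.hasEigenvector_iff, Module.End.mem_eigenspace_iff]
  refine ⟨Subtype.ext hfv, ?_⟩
  intro h
  have h5 : v = 0 := congrArg Subtype.val h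
  rw [h5] at hv0
  simp at hv0

set_option synthInstance.maxHeartbeats 1000000 in
/-- The character of any `n`-cycle `σ ∈ Sₙ` on the irreducible representation `⋀ᵏV`
(`V` the standard `(n-1)`-dimensional representation) equals `(-1)ᵏ`. -/
theorem character_n_cycle_on_exterior_power (n k : ℕ) (hk : k ≤ n - 1)
    (σ : Equiv.Perm (Fin n)) (hσ : σ.IsCycle ∧ σ.support = univ) :
    LinearMap.trace ℂ _ (extMap n k (permV σ)) = (-1 : ℂ) ^ k := by
  obtain ⟨m, rfl⟩ : ∃ m, n = m + 1 := by
    obtain ⟨i0, -, -⟩ := hσ.1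
    exact ⟨n - 1, by have := i0.2; omega⟩
  have hζ := Complex.isPrimitiveRoot_exp (m+1) (Nat.succ_ne_zero m)
  set ζ := Complex.exp (2 * Real.pi * Complex.I / ((m+1 : ℕ) : ℂ)) with hζd
  clear_value ζ
  have hE : ∀ j : Fin m, ∃ x, Module.End.HasEigenvector (permV σ) (ζ ^ ((j:ℕ)+1)) x := fun j =>
    (aux_eigen σ hσ (ζ ^ ((j:ℕ)+1))
      (hζ.pow_ne_one_of_pos_of_lt (Nat.succ_ne_zero _) (by omega))
      (by rw [← pow_mul, mul_comm, pow_mul, hζ.pow_eq_one, one_pow])).exists_hasEigenvector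
  choose x hx using hE
  have hinj : Function.Injective (fun j : Fin m => ζ ^ ((j:ℕ)+1)) := by
    intro a b hab
    have := hζ.pow_inj (by omega) (by omega) hab
    exact Fin.ext (by omega)
  have hli : LinearIndependent ℂ x :=
    Module.End.eigenvectors_linearIndependent' (permV σ) _ hinj x hx
  have hdim : Module.finrank ℂ (Vsub (m+1)) = m := by
    have hne : sumL (m+1) ≠ 0 := by
      intro h
      have h2 := LinearMap.congr_fun h (Pi.single 0 1)
      simp [sumL] at h2
    have h3 := Module.Dual.finrank_ker_add_one_of_ne_zero (f := sumL (m+1)) hne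
    rw [Module.finrank_fin_fun] at h3
    exact Nat.succ_injective h3
  rcases Nat.eq_zero_or_pos m with h0 | hpos
  · subst h0
    exact absurd (Equiv.ext fun i => Fin.ext (by have := (σ i).2; have := i.2; simp only [Equiv.Perm.one_apply]; omega)) hσ.1.ne_one
  have : Nonempty (Fin m) := ⟨⟨0, hpos⟩⟩
  let b := basisOfLinearIndependentOfCardEqFinrank hli (by simp [hdim])
  rw [aux_trace (m+1) k m (permV σ) b (fun j => ζ ^ ((j:ℕ)+1))]
  · exact aux_esymm m k (by omega) ζ hζ
  · intro j
    simp only [b, coe_basisOfLinearIndependentOfCardEqFinrank]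
    exact (hx j).apply_eq_smul
end

section
/- The number of sequences of n-1 transpositions in Sₙ whose product is an n-cycle equals (n-1)!·n^{n-2}. Moreover, for any labeled tree on vertex set {1,...,n}, the product of the n-1 transpositions corresponding to its edges, taken in any order, is always an n-cycle; conversely every minimal transitive factorization of an n-cycle arises this way from a tree. -/
open Finset Equiv

/-- The ordered product `τ_m ⋯ τ_1` of a sequence of permutations. -/
def prodRev {n m : ℕ} (τ : Fin m → Equiv.Perm (Fin n)) : Equiv.Perm (Fin n) :=
  (List.ofFn τ).reverse.prod

/-- `σ` is an `n`-cycle of `Sₙ`. -/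
def IsNCycle {n : ℕ} (σ : Equiv.Perm (Fin n)) : Prop :=
  σ.IsCycle ∧ σ.support = univ

/-- The transposition associated to an unordered pair. -/
def sym2Swap {n : ℕ} : Sym2 (Fin n) → Equiv.Perm (Fin n) :=
  Sym2.lift ⟨fun a b => Equiv.swap a b, fun a b => Equiv.swap_comm a b⟩

set_option linter.unusedSectionVars false

section GZ
variable {V : Type} [Fintype V] [DecidableEq V]

def mrg (c : V → V) (q : V × V) : V → V := fun z => if c z = c q.1 then c q.2 else c z

def lab (L : List (V × V)) : V → V := L.foldr (fun q c => mrg c q) id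

def prm (L : List (V × V)) : Equiv.Perm V := (L.map fun q => Equiv.swap q.1 q.2).prod

theorem mrg_of_eq (c : V → V) (q : V × V) (h : c q.1 = c q.2) : mrg c q = c := by
  funext z; unfold mrg; split_ifs with h1
  · rw [h1, h]
  · rfl

theorem mrg_mono (c : V → V) (q : V × V) {u v : V} (h : c u = c v) : mrg c q u = mrg c q v := by
  unfold mrg; rw [h]

theorem mrg_pair (c : V → V) (q : V × V) : mrg c q q.1 = mrg c q q.2 := by
  unfold mrg; simp

theorem mrg_le (c : V → V) (q : V × V) (r : V → V → Prop) (hr : Equivalence r)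
    (hc : ∀ u v, c u = c v → r u v) (hq : r q.1 q.2) {u v : V}
    (h : mrg c q u = mrg c q v) : r u v := by
  unfold mrg at h
  split_ifs at h with h1 h2 h2
  · exact hc _ _ (h1.trans h2.symm)
  · exact hr.trans (hc _ _ h1) (hr.trans hq (hc _ _ h))
  · exact hr.trans (hc _ _ h) (hr.trans (hr.symm hq) (hr.symm (hc _ _ h2)))
  · exact hc _ _ h

theorem image_mrg (c : V → V) (q : V × V) (h : c q.1 ≠ c q.2) :
    univ.image (mrg c q) = (univ.image c).erase (c q.1) := by
  ext i
  simp only [mem_image, mem_univ, true_and, mem_erase]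
  constructor
  · rintro ⟨z, rfl⟩
    unfold mrg
    split_ifs with h1
    · exact ⟨h.symm, _, rfl⟩
    · exact ⟨h1, _, rfl⟩
  · rintro ⟨hi, z, rfl⟩
    exact ⟨z, by simp [mrg, hi]⟩

theorem card_image_mrg (c : V → V) (q : V × V) (h : c q.1 ≠ c q.2) :
    #(univ.image (mrg c q)) + 1 = #(univ.image c) := by
  rw [image_mrg c q h]
  exact card_erase_add_one (mem_image_of_mem _ (mem_univ _))

theorem card_image_mrg_ge (c : V → V) (q : V × V) :
    #(univ.image c) ≤ #(univ.image (mrg c q)) + 1 := by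
  by_cases h : c q.1 = c q.2
  · rw [mrg_of_eq c q h]; omega
  · exact (card_image_mrg c q h).ge

theorem lab_card (L : List (V × V)) : Fintype.card V ≤ #(univ.image (lab L)) + L.length := by
  induction L with
  | nil => simp [lab]
  | cons q L ih =>
    have := card_image_mrg_ge (lab L) q
    have h2 : lab (q :: L) = mrg (lab L) q := rfl
    rw [h2, List.length_cons]; omega

theorem sameCycle_mrg (σ : Equiv.Perm V) (a b : V) (h : ¬ σ.SameCycle a b) :
    (Equiv.swap a b * σ).SameCycle a b ∧
      ∀ u v, σ.SameCycle u v → (Equiv.swap a b * σ).SameCycle u v := by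
  set ρ := Equiv.swap a b * σ with hρ
  have hstep : ∀ x, σ x ≠ a → σ x ≠ b → ρ.SameCycle x (σ x) := by
    intro x h1 h2
    refine ⟨1, ?_⟩
    simp [hρ, Equiv.swap_apply_of_ne_of_ne h1 h2]
  have key : ∀ i : ℕ, ρ.SameCycle b ((σ ^ i) b) ∨ ρ.SameCycle a b := by
    intro i
    induction i with
    | zero => left; exact Equiv.Perm.SameCycle.refl _ _
    | succ i ih =>
      rcases ih with ih | ih
      · have e : (σ ^ (i+1)) b = σ ((σ ^ i) b) := by rw [pow_succ']; rfl
        by_cases h1 : σ ((σ ^ i) b) = a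
        · exact absurd ⟨((i + 1 : ℕ) : ℤ), by rw [zpow_natCast, e, h1]⟩ (fun hh => h (Equiv.Perm.SameCycle.symm hh))
        by_cases h2 : σ ((σ ^ i) b) = b
        · left; rw [e, h2]
        · left; rw [e]; exact ih.trans (hstep _ h1 h2)
      · exact Or.inr ih
  have hab : ρ.SameCycle a b := by
    have ho : 0 < orderOf σ := orderOf_pos σ
    rcases key (orderOf σ - 1) with h1 | h1
    · have e : σ ((σ ^ (orderOf σ - 1)) b) = b := by
        have : σ * σ ^ (orderOf σ - 1) = 1 := by
          rw [← pow_succ', Nat.sub_add_cancel ho, pow_orderOf_eq_one]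
        rw [← Equiv.Perm.mul_apply, this]; rfl
      have h2 : ρ.SameCycle ((σ ^ (orderOf σ - 1)) b) a :=
        ⟨1, by simp only [zpow_one, hρ, Equiv.Perm.mul_apply]; rw [e]; simp⟩
      exact (h1.trans h2).symm
    · exact h1
  refine ⟨hab, ?_⟩
  have hs : ∀ x, ρ.SameCycle x (σ x) := by
    intro x
    by_cases h1 : σ x = a
    · have : ρ.SameCycle x b := ⟨1, by simp [hρ, h1]⟩
      rw [h1]; exact this.trans hab.symm
    by_cases h2 : σ x = b
    · have : ρ.SameCycle x a := ⟨1, by simp [hρ, h2]⟩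
      rw [h2]; exact this.trans hab
    exact hstep x h1 h2
  intro u v huv
  obtain ⟨i, -, rfl⟩ := huv.exists_pow_eq'
  clear huv
  induction i with
  | zero => exact Equiv.Perm.SameCycle.refl _ _
  | succ i ih => rw [pow_succ']; exact ih.trans (hs _)

theorem sameCycle_le (σ : Equiv.Perm V) (c : V → V) (h : ∀ x, c (σ x) = c x) {u v : V}
    (huv : σ.SameCycle u v) : c u = c v := by
  obtain ⟨i, -, rfl⟩ := huv.exists_pow_eq'
  clear huv
  induction i with
  | zero => simp
  | succ i ih => rw [pow_succ', Equiv.Perm.mul_apply, h]; exact ih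

theorem lab_prm (L : List (V × V)) (x : V) : lab L (prm L x) = lab L x := by
  induction L generalizing x with
  | nil => simp [lab, prm]
  | cons q L ih =>
    have h2 : lab (q :: L) = mrg (lab L) q := rfl
    have h3 : prm (q :: L) = Equiv.swap q.1 q.2 * prm L := by simp [prm]
    rw [h2, h3, Equiv.Perm.mul_apply]
    have : ∀ z, mrg (lab L) q (Equiv.swap q.1 q.2 z) = mrg (lab L) q z := by
      intro z
      by_cases h : z = q.1
      · rw [h, Equiv.swap_apply_left, mrg_pair]
      · by_cases h' : z = q.2
        · rw [h', Equiv.swap_apply_right, mrg_pair]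
        · rw [Equiv.swap_apply_of_ne_of_ne h h']
    rw [this]
    exact mrg_mono _ _ (ih x)

theorem lab_sameCycle (L : List (V × V)) (hL : #(univ.image (lab L)) + L.length ≤ Fintype.card V)
    (u v : V) (h : lab L u = lab L v) : (prm L).SameCycle u v := by
  induction L generalizing u v with
  | nil => simp [lab] at h; subst h; exact Equiv.Perm.SameCycle.refl _ _
  | cons q L ih =>
    have h2 : lab (q :: L) = mrg (lab L) q := rfl
    have h3 : prm (q :: L) = Equiv.swap q.1 q.2 * prm L := by simp [prm]
    have h4 := lab_card L
    rw [h2, List.length_cons] at hL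
    have h5 : lab L q.1 ≠ lab L q.2 := by
      intro h; rw [mrg_of_eq _ _ h] at hL; omega
    have h6 := card_image_mrg _ _ h5
    have ih' := ih (by omega)
    have h7 : ¬ (prm L).SameCycle q.1 q.2 := fun hh => h5 (sameCycle_le _ _ (lab_prm L) hh)
    obtain ⟨h8, h9⟩ := sameCycle_mrg _ _ _ h7
    rw [h3]
    rw [h2] at h
    exact mrg_le (lab L) q _ (Equiv.Perm.SameCycle.equivalence _)
      (fun u v h => h9 _ _ (ih' u v h)) h8 h

/-- constant labelings -/
def IsConst (c : V → V) : Prop := ∀ u v, c u = c v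

theorem lab_pair (L : List (V × V)) (q : V × V) (h : q ∈ L) : lab L q.1 = lab L q.2 := by
  induction L with
  | nil => simp at h
  | cons r L ih =>
    have h2 : lab (r :: L) = mrg (lab L) r := rfl
    rw [h2]
    rcases List.mem_cons.1 h with rfl | h
    · exact mrg_pair _ _
    · exact mrg_mono _ _ (ih h)

theorem lab_le (L : List (V × V)) (r : V → V → Prop) (hr : Equivalence r)
    (hL : ∀ q ∈ L, r q.1 q.2) (u v : V) (h : lab L u = lab L v) : r u v := by
  induction L generalizing u v with
  | nil => simp [lab] at h; subst h; exact hr.refl _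
  | cons q L ih =>
    exact mrg_le (lab L) q r hr (ih fun q hq => hL q (List.mem_cons_of_mem _ hq))
      (hL q List.mem_cons_self) h

theorem const_iff [Nonempty V] (c : V → V) : IsConst c ↔ #(univ.image c) = 1 := by
  constructor
  · intro h
    rw [card_eq_one]
    obtain ⟨v⟩ := ‹Nonempty V›
    refine ⟨c v, ?_⟩
    ext i; simp only [mem_image, mem_univ, true_and, mem_singleton]
    exact ⟨fun ⟨a, ha⟩ => ha ▸ h a v, fun h => ⟨v, h.symm⟩⟩
  · intro h u v
    exact card_le_one.1 h.le _ (mem_image_of_mem _ (mem_univ _)) _ (mem_image_of_mem _ (mem_univ _))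

/-- fiber size -/
def fb (c : V → V) (i : V) : ℕ := #{z | c z = i}

def PP (c : V → V) : ℚ := ∏ i ∈ univ.image c, (fb c i : ℚ)

theorem fb_pos (c : V → V) (x : V) : 0 < fb c (c x) :=
  card_pos.2 ⟨x, by simp⟩

theorem PP_mrg (c : V → V) (q : V × V) (h : c q.1 ≠ c q.2) :
    PP (mrg c q) = PP c * (1 / fb c (c q.1) + 1 / fb c (c q.2)) := by
  have m1 : c q.1 ∈ univ.image c := mem_image_of_mem _ (mem_univ _)
  have m2 : c q.2 ∈ (univ.image c).erase (c q.1) :=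
    mem_erase.2 ⟨h.symm, mem_image_of_mem _ (mem_univ _)⟩
  have p1 : (fb c (c q.1) : ℚ) ≠ 0 := by exact_mod_cast (fb_pos c _).ne'
  have p2 : (fb c (c q.2) : ℚ) ≠ 0 := by exact_mod_cast (fb_pos c _).ne'
  unfold PP
  rw [image_mrg c q h, ← mul_prod_erase _ _ m1, ← mul_prod_erase _ _ m2, ← mul_prod_erase _ _ m2]
  have e : ∀ i ∈ ((univ.image c).erase (c q.1)).erase (c q.2),
      (fb (mrg c q) i : ℚ) = fb c i := by
    intro i hi
    simp only [mem_erase] at hi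
    unfold fb
    congr 2
    ext z
    simp only [mem_filter, mem_univ, true_and]
    unfold mrg
    split_ifs with h1
    · rw [h1]; exact ⟨fun h => absurd h.symm hi.1, fun h => absurd h.symm hi.2.1⟩
    · rfl
  rw [prod_congr rfl e]
  have e2 : fb (mrg c q) (c q.2) = fb c (c q.1) + fb c (c q.2) := by
    unfold fb
    rw [← card_union_of_disjoint]
    · congr 1
      ext z
      simp only [mem_filter, mem_univ, true_and, mem_union]
      unfold mrg
      split_ifs with h1 <;> simp [h1]
    · rw [disjoint_filter]
      intro z _ h1 h2
      exact h (h1.symm.trans h2)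
  rw [e2]; push_cast
  field_simp
  ring

theorem sum_inv (c : V → V) : ∑ x, (1 / fb c (c x) : ℚ) = #(univ.image c) := by
  rw [← sum_fiberwise_of_maps_to (s := univ) (t := univ.image c) (g := c)
    (fun x _ => mem_image_of_mem _ (mem_univ _))]
  rw [card_eq_sum_ones, Nat.cast_sum]
  refine sum_congr rfl fun i hi => ?_
  obtain ⟨x, -, rfl⟩ := mem_image.1 hi
  have p1 : (fb c (c x) : ℚ) ≠ 0 := by exact_mod_cast (fb_pos c _).ne'
  rw [sum_congr rfl (g := fun _ => (1 / fb c (c x) : ℚ))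
    (fun z hz => by rw [(mem_filter.1 hz).2])]
  rw [sum_const, nsmul_eq_mul]
  change (fb c (c x) : ℚ) * _ = _
  field_simp
  simp

theorem sum_pairs (c : V → V) :
    ∑ q : V × V, (if c q.1 = c q.2 then 0 else (1 / fb c (c q.1) + 1 / fb c (c q.2) : ℚ))
      = 2 * Fintype.card V * (#(univ.image c) - 1) := by
  have e : ∀ q : V × V, (if c q.1 = c q.2 then 0 else (1 / fb c (c q.1) + 1 / fb c (c q.2) : ℚ))
      = (1 / fb c (c q.1) + 1 / fb c (c q.2)) -
        (if c q.2 = c q.1 then (2 / fb c (c q.1) : ℚ) else 0) := by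
    intro q
    by_cases h : c q.1 = c q.2
    · simp [h]; ring
    · simp [h, Ne.symm h]
  simp_rw [e]
  rw [sum_sub_distrib, sum_add_distrib, Fintype.sum_prod_type, Fintype.sum_prod_type,
    Fintype.sum_prod_type]
  have e3 : ∀ x, ∑ y, (if c y = c x then (2 / fb c (c x) : ℚ) else 0) = 2 := by
    intro x
    have p1 : (fb c (c x) : ℚ) ≠ 0 := by exact_mod_cast (fb_pos c _).ne'
    rw [← sum_filter, sum_const, nsmul_eq_mul]
    change (fb c (c x) : ℚ) * _ = _
    field_simp
  simp only [e3, sum_inv, sum_const, nsmul_eq_mul, ← mul_sum, card_univ]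
  ring

open Classical in
noncomputable def MM (m : ℕ) (c : V → V) : ℕ :=
  #{p : Fin m → V × V | IsConst ((List.ofFn p).foldl mrg c)}

theorem MM_succ (m : ℕ) (c : V → V) : MM (m+1) c = ∑ q : V × V, MM m (mrg c q) := by
  classical
  unfold MM
  simp only [card_filter]
  rw [← (Fin.consEquiv (fun _ : Fin (m+1) => V × V)).sum_comp, Fintype.sum_prod_type]
  simp [List.ofFn_succ, Fin.consEquiv]

theorem foldl_card (L : List (V × V)) (c : V → V) :
    #(univ.image c) ≤ #(univ.image (L.foldl mrg c)) + L.length := by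
  induction L generalizing c with
  | nil => simp
  | cons q L ih =>
    have := card_image_mrg_ge c q
    have := ih (mrg c q)
    simp only [List.foldl_cons, List.length_cons]; omega

theorem MM_zero [Nonempty V] (m : ℕ) (c : V → V) (h : m + 1 < #(univ.image c)) : MM m c = 0 := by
  classical
  unfold MM
  rw [card_eq_zero, filter_eq_empty_iff]
  intro p _ hp
  rw [const_iff] at hp
  have := foldl_card (List.ofFn p) c
  rw [hp, List.length_ofFn] at this
  omega

theorem MM_formula [Nonempty V] (m : ℕ) (c : V → V) (h : #(univ.image c) = m + 1) :
    (Fintype.card V : ℚ) * MM m c = m.factorial * (2 * Fintype.card V) ^ m * PP c := by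
  classical
  induction m generalizing c with
  | zero =>
    have hc : IsConst c := (const_iff c).2 h
    have : MM 0 c = 1 := by simp [MM, hc]
    obtain ⟨v⟩ := ‹Nonempty V›
    have hi : univ.image c = {c v} := by
      obtain ⟨w, hw⟩ := card_eq_one.1 h
      have : c v ∈ univ.image c := mem_image_of_mem _ (mem_univ _)
      rw [hw, mem_singleton] at this
      rw [hw, this]
    have hf : fb c (c v) = Fintype.card V := by
      unfold fb
      rw [filter_true_of_mem (fun z _ => hc z v), card_univ]
    simp [this, PP, hi, hf]
  | succ m ih =>
    rw [MM_succ, Nat.cast_sum, mul_sum]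
    have : ∀ q : V × V, (Fintype.card V : ℚ) * MM m (mrg c q) =
        (m.factorial * (2 * Fintype.card V) ^ m * PP c) *
        (if c q.1 = c q.2 then 0 else (1 / fb c (c q.1) + 1 / fb c (c q.2) : ℚ)) := by
      intro q
      by_cases hq : c q.1 = c q.2
      · rw [mrg_of_eq c q hq, MM_zero m c (by omega)]; simp [hq]
      · have := card_image_mrg c q hq
        rw [ih (mrg c q) (by omega), PP_mrg c q hq, if_neg hq]; ring
    rw [sum_congr rfl fun q _ => this q, ← mul_sum, sum_pairs, h, Nat.factorial_succ]
    push_cast; ring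

theorem MM_id [Nonempty V] (m : ℕ) (h : Fintype.card V = m + 1) :
    MM m (id : V → V) = 2 ^ m * (m.factorial * (m + 1) ^ (m - 1)) := by
  have := MM_formula m (id : V → V) (by simp [h])
  have hP : PP (id : V → V) = 1 := by
    unfold PP; apply prod_eq_one; intro i _; simp [fb, filter_eq']
  rw [hP, h, mul_one] at this
  have h2 : (m + 1) * MM m (id : V → V) = m.factorial * (2 * (m+1)) ^ m := by exact_mod_cast this
  apply Nat.eq_of_mul_eq_mul_left (Nat.succ_pos m)
  rw [Nat.succ_eq_add_one, h2, mul_pow]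
  rcases m with _ | m
  · simp
  · simp only [Nat.add_sub_cancel]; ring

theorem swap_fiber (s : Equiv.Perm V) (hs : s.IsSwap) :
    #{q : V × V | q.1 ≠ q.2 ∧ Equiv.swap q.1 q.2 = s} = 2 := by
  obtain ⟨a, b, hab, rfl⟩ := hs
  have : ({q : V × V | q.1 ≠ q.2 ∧ Equiv.swap q.1 q.2 = Equiv.swap a b} : Finset _)
      = {(a, b), (b, a)} := by
    ext ⟨x, y⟩
    simp only [mem_filter, mem_univ, true_and, mem_insert, mem_singleton, Prod.mk.injEq]
    constructor
    · rintro ⟨h1, h2⟩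
      have e1 := congrArg (fun f : Equiv.Perm V => f a) h2
      have e2 := congrArg (fun f : Equiv.Perm V => f b) h2
      simp only [Equiv.swap_apply_left, Equiv.swap_apply_right, Equiv.swap_apply_def] at e1 e2
      grind
    · rintro (⟨rfl, rfl⟩ | ⟨rfl, rfl⟩)
      · exact ⟨hab, rfl⟩
      · exact ⟨hab.symm, Equiv.swap_comm _ _⟩
  rw [this, card_pair]
  simp [hab]

end GZ

theorem swap_inj_sym2 {V : Type} [DecidableEq V] {a b x y : V} (hab : a ≠ b)
    (h2 : Equiv.swap a b = Equiv.swap x y) : s(a, b) = s(x, y) := by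
  have e1 := congrArg (fun f : Equiv.Perm V => f a) h2
  have e2 := congrArg (fun f : Equiv.Perm V => f b) h2
  simp only [Equiv.swap_apply_left, Equiv.swap_apply_right, Equiv.swap_apply_def] at e1 e2
  rw [Sym2.eq_iff]
  grind

theorem lab_foldl {V : Type} [DecidableEq V] (L : List (V × V)) :
    lab L.reverse = L.foldl mrg id := by
  unfold lab
  rw [List.foldr_reverse]

theorem lab_card_strict {V : Type} [Fintype V] [DecidableEq V] (L : List (V × V)) (q : V × V)
    (hq : q ∈ L) (h : q.1 = q.2) : Fintype.card V < #(univ.image (lab L)) + L.length := by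
  induction L with
  | nil => simp at hq
  | cons r L ih =>
    have h2 : lab (r :: L) = mrg (lab L) r := rfl
    rw [h2, List.length_cons]
    rcases List.mem_cons.1 hq with rfl | hq
    · rw [mrg_of_eq _ _ (by rw [h])]
      have := lab_card L
      omega
    · have := card_image_mrg_ge (lab L) r
      have := ih hq
      omega

theorem prodRev_eq {n m : ℕ} (p : Fin m → Fin n × Fin n) :
    prodRev (fun i => Equiv.swap (p i).1 (p i).2) = prm (List.ofFn p).reverse := by
  unfold prodRev prm
  rw [List.map_reverse, List.map_ofFn]
  rfl

theorem isNCycle_iff {n : ℕ} (hn : 2 ≤ n) (σ : Equiv.Perm (Fin n)) :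
    IsNCycle σ ↔ ∀ u v, σ.SameCycle u v := by
  have : Nontrivial (Fin n) := Fin.nontrivial_iff_two_le.2 hn
  constructor
  · rintro ⟨h1, h2⟩ u v
    have h3 : ∀ x, σ x ≠ x := fun x => Equiv.Perm.mem_support.1 (h2 ▸ mem_univ x)
    exact h1.sameCycle (h3 u) (h3 v)
  · intro h
    have h3 : ∀ x, σ x ≠ x := by
      intro x hx
      obtain ⟨y, hy⟩ := exists_ne x
      exact hy ((h x y).eq_of_left hx).symm
    refine ⟨⟨⟨0, by omega⟩, h3 _, fun y _ => h _ y⟩, ?_⟩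
    ext x; simp [h3 x]

theorem nCycle_const {n : ℕ} (hn : 2 ≤ n) (p : Fin (n - 1) → Fin n × Fin n) :
    IsNCycle (prodRev fun i => Equiv.swap (p i).1 (p i).2) ↔ IsConst (lab (List.ofFn p).reverse) := by
  have : Nonempty (Fin n) := ⟨⟨0, by omega⟩⟩
  rw [isNCycle_iff hn, prodRev_eq]
  constructor
  · intro h u v
    exact sameCycle_le _ _ (lab_prm _) (h u v)
  · intro h u v
    refine lab_sameCycle _ ?_ u v (h u v)
    rw [(const_iff _).1 h]
    simp
    omega

theorem part1 (n : ℕ) (hn : 2 ≤ n) :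
    Nat.card {τ : Fin (n - 1) → Equiv.Perm (Fin n) //
        (∀ i, (τ i).IsSwap) ∧ IsNCycle (prodRev τ)}
      = (n - 1).factorial * n ^ (n - 2) := by
  classical
  have : Nonempty (Fin n) := ⟨⟨0, by omega⟩⟩
  have hM := MM_id (V := Fin n) (n - 1) (by simp; omega)
  rw [Nat.card_eq_fintype_card, Fintype.card_subtype]
  apply Nat.eq_of_mul_eq_mul_left (pow_pos (by norm_num : 0 < 2) (n - 1))
  have e1 : n - 1 + 1 = n := by omega
  have e2 : n - 1 - 1 = n - 2 := by omega
  rw [e1, e2] at hM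
  rw [← hM]
  unfold MM
  simp only [← lab_foldl]
  have hne : ∀ p : Fin (n - 1) → Fin n × Fin n, IsConst (lab (List.ofFn p).reverse) →
      ∀ i, (p i).1 ≠ (p i).2 := by
    intro p hp i hi
    have := lab_card_strict (List.ofFn p).reverse (p i) (by simp) hi
    rw [(const_iff _).1 hp] at this
    simp at this
    omega
  rw [card_eq_sum_card_fiberwise
    (f := fun (p : Fin (n - 1) → Fin n × Fin n) i => Equiv.swap (p i).1 (p i).2)
    (t := {τ : Fin (n - 1) → Equiv.Perm (Fin n) | (∀ i, (τ i).IsSwap) ∧ IsNCycle (prodRev τ)})]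
  · rw [sum_congr rfl (g := fun _ => 2 ^ (n - 1)), sum_const, smul_eq_mul, mul_comm]
    intro τ hτ
    simp only [mem_filter, mem_univ, true_and] at hτ
    have : (({p : Fin (n - 1) → Fin n × Fin n | IsConst (lab (List.ofFn p).reverse)} :
        Finset _).filter fun p => (fun i => Equiv.swap (p i).1 (p i).2) = τ)
        = Fintype.piFinset fun i => {q : Fin n × Fin n | q.1 ≠ q.2 ∧ Equiv.swap q.1 q.2 = τ i} := by
      ext p
      simp only [mem_filter, mem_univ, true_and, Fintype.mem_piFinset]
      constructor
      · rintro ⟨h1, h2⟩ i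
        exact ⟨hne p h1 i, congrFun h2 i⟩
      · intro h
        have h2 : (fun i => Equiv.swap (p i).1 (p i).2) = τ := funext fun i => (h i).2
        refine ⟨?_, h2⟩
        rw [← nCycle_const hn, h2]
        exact hτ.2
    rw [this, Fintype.card_piFinset, prod_congr rfl (fun i _ => swap_fiber (τ i) (hτ.1 i))]
    simp
  · intro p hp
    simp only [coe_filter, mem_univ, true_and, Set.mem_ofPred_eq] at hp ⊢
    exact ⟨fun i => ⟨_, _, hne p hp i, rfl⟩, (nCycle_const hn p).2 hp⟩

theorem part2 (n : ℕ) (hn : 2 ≤ n) : ∀ t : SimpleGraph (Fin n), t.IsTree →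
        ∀ f : Fin (n - 1) → Sym2 (Fin n), Function.Injective f →
          (∀ e, e ∈ t.edgeSet ↔ ∃ i, f i = e) →
          IsNCycle (prodRev fun i => sym2Swap (f i)) := by
  intro t ht f _ hf
  have hp : ∀ i, ∃ q : Fin n × Fin n, f i = s(q.1, q.2) := by
    intro i
    induction h : f i with
    | _ a b => exact ⟨(a, b), rfl⟩
  choose p hp using hp
  have e : (fun i => sym2Swap (f i)) = fun i => Equiv.swap (p i).1 (p i).2 := by
    funext i; rw [hp i]; rfl
  rw [e, nCycle_const hn]
  intro u v
  obtain ⟨w⟩ := ht.connected.preconnected u v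
  induction w with
  | nil => rfl
  | @cons a b c hab w ih =>
    refine Eq.trans ?_ ih
    obtain ⟨i, hi⟩ := (hf s(a, b)).1 hab
    have := lab_pair (List.ofFn p).reverse (p i) (by simp)
    rw [hp i, Sym2.eq_iff] at hi
    rcases hi with ⟨h1, h2⟩ | ⟨h1, h2⟩
    · rw [← h1, ← h2, this]
    · rw [← h1, ← h2, this]

theorem part3 (n : ℕ) (hn : 2 ≤ n) :
    ∀ τ : Fin (n - 1) → Equiv.Perm (Fin n), (∀ i, (τ i).IsSwap) →
        IsNCycle (prodRev τ) →
          Function.Injective τ ∧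
            (SimpleGraph.fromRel fun a b => ∃ k, τ k = Equiv.swap a b).IsTree := by
  intro τ hτ hc
  have : Nonempty (Fin n) := ⟨⟨0, by omega⟩⟩
  have hp : ∀ i, ∃ q : Fin n × Fin n, q.1 ≠ q.2 ∧ τ i = Equiv.swap q.1 q.2 := by
    intro i
    obtain ⟨a, b, h1, h2⟩ := hτ i
    exact ⟨(a, b), h1, h2⟩
  choose p hp1 hp2 using hp
  have e : τ = fun i => Equiv.swap (p i).1 (p i).2 := funext hp2
  have hconst : IsConst (lab (List.ofFn p).reverse) := by
    rw [← nCycle_const hn, ← e]; exact hc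
  set G := SimpleGraph.fromRel fun a b => ∃ k, τ k = Equiv.swap a b with hG
  have hconn : G.Connected := by
    refine ⟨fun u v => ?_⟩
    refine lab_le _ G.Reachable G.reachable_is_equivalence ?_ u v (hconst u v)
    intro q hq
    simp only [List.mem_reverse, List.mem_ofFn] at hq
    obtain ⟨i, rfl⟩ := hq
    apply SimpleGraph.Adj.reachable
    rw [hG, SimpleGraph.fromRel_adj]
    exact ⟨hp1 i, Or.inl ⟨i, hp2 i⟩⟩
  have h1 := hconn.card_vert_le_card_edgeSet_add_one
  have h2 : G.edgeSet.ncard ≤ (Set.range τ).ncard := by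
    refine Set.ncard_le_ncard_of_injOn sym2Swap ?_ ?_ (Set.toFinite _)
    · intro x
      induction x with
      | _ a b =>
        intro h
        rw [SimpleGraph.mem_edgeSet, hG, SimpleGraph.fromRel_adj] at h
        rcases h.2 with ⟨k, hk⟩ | ⟨k, hk⟩
        · exact ⟨k, hk⟩
        · exact ⟨k, hk.trans (Equiv.swap_comm _ _)⟩
    · intro x hx y hy h
      induction x with
      | _ a b =>
      induction y with
      | _ c d =>
        exact swap_inj_sym2 (G.ne_of_adj ((SimpleGraph.mem_edgeSet G).1 hx)) h
  have h4 : (Set.range τ).ncard = #(univ.image τ) := by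
    rw [← Set.ncard_coe_finset]; simp
  have h3 : #(univ.image τ) ≤ n - 1 := by
    simpa using card_image_le (s := univ) (f := τ)
  rw [Nat.card_coe_set_eq] at h1
  rw [Nat.card_eq_fintype_card, Fintype.card_fin] at h1
  constructor
  · rw [← Set.injOn_univ, ← coe_univ, ← card_image_iff]
    simp; omega
  · rw [SimpleGraph.isTree_iff_connected_and_card]
    refine ⟨hconn, ?_⟩
    rw [Nat.card_coe_set_eq, Nat.card_eq_fintype_card, Fintype.card_fin]
    omega

/-- (1) The number of sequences of `n-1` transpositions in `Sₙ` multiplying to an `n`-cycle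
is `(n-1)!·n^{n-2}`; (2) for every labeled tree on `{1,…,n}` the product of the transpositions
of its edges in any order is an `n`-cycle; (3) conversely, every sequence of `n-1`
transpositions multiplying to an `n`-cycle consists of distinct transpositions whose
underlying graph is a tree. -/
theorem genus_zero_factorizations (n : ℕ) (hn : 2 ≤ n) :
    (Nat.card {τ : Fin (n - 1) → Equiv.Perm (Fin n) //
        (∀ i, (τ i).IsSwap) ∧ IsNCycle (prodRev τ)}
      = (n - 1).factorial * n ^ (n - 2))
    ∧ (∀ t : SimpleGraph (Fin n), t.IsTree →
        ∀ f : Fin (n - 1) → Sym2 (Fin n), Function.Injective f →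
          (∀ e, e ∈ t.edgeSet ↔ ∃ i, f i = e) →
          IsNCycle (prodRev fun i => sym2Swap (f i)))
    ∧ (∀ τ : Fin (n - 1) → Equiv.Perm (Fin n), (∀ i, (τ i).IsSwap) →
        IsNCycle (prodRev τ) →
          Function.Injective τ ∧
            (SimpleGraph.fromRel fun a b => ∃ k, τ k = Equiv.swap a b).IsTree) := by
  exact ⟨part1 n hn, part2 n hn, part3 n hn⟩
end

section
/- Let G be the graph with one vertex and 2g loops (one-vertex graph of valency 4g). Among its (4g-1)! embeddings into oriented surfaces (cyclic orders of the 4g half-edges), exactly (4g-1)!/(2g+1) are one-faced, i.e., the ratio of one-faced embeddings to all embeddings is 1/(2g+1) (Harer–Zagier's count of one-faced gluings of a 4g-gon... specifically of a graph with one vertex). -/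
open Finset Equiv

open Polynomial in
/-- The Boccara polynomial of a single cycle. -/
noncomputable def bP (m : ℕ) : ℝ[X] := X ^ m - (X - 1) ^ m

open Polynomial in
/-- The Boccara polynomial of a permutation. -/
noncomputable def bW {α : Type*} [Fintype α] [DecidableEq α] (τ : Perm α) : ℝ[X] :=
  (τ.cycleType.map bP).prod

/-- Transitivity of a permutation, via invariant predicates. -/
def FullC {α : Type*} (γ : Perm α) : Prop :=
  ∀ p : α → Prop, (∀ x, p x → p (γ x)) → (∃ x, p x) → ∀ x, p x

lemma bP_one : bP 1 = 1 := by simp [bP]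
lemma bP_zero : bP 0 = 0 := by simp [bP]

lemma bP_merge (k m : ℕ) :
    bP (k + 1) * bP (m + 1) - bP (k + (m + 1)) = 
      Polynomial.X * (Polynomial.X - 1) * bP k * bP m := by
  unfold bP
  obtain ⟨V, hV⟩ : ∃ V : Polynomial ℝ, Polynomial.X - 1 = V := ⟨_, rfl⟩
  have hU : (Polynomial.X : Polynomial ℝ) = V + 1 := by rw [← hV]; ring
  rw [hV]
  simp only [pow_succ, pow_add]
  generalize (Polynomial.X : Polynomial ℝ) ^ k = A
  generalize (Polynomial.X : Polynomial ℝ) ^ m = B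
  generalize V ^ k = C
  generalize V ^ m = D
  rw [hU]; ring

lemma bP_deriv (k : ℕ) : Polynomial.derivative (bP k) = k * bP (k - 1) := by
  unfold bP
  simp [Polynomial.derivative_pow]
  ring

lemma bP_split_sum (j : ℕ) :
    ∑ i ∈ range j, bP (i + 1) * bP (j - i) =
      (j : Polynomial ℝ) * (Polynomial.X ^ (j + 1) + (Polynomial.X - 1) ^ (j + 1))
        - 2 * (Polynomial.X * (Polynomial.X - 1)) * bP j := by
  unfold bP
  obtain ⟨V, hV⟩ : ∃ V : Polynomial ℝ, Polynomial.X - 1 = V := ⟨_, rfl⟩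
  have hU : (Polynomial.X : Polynomial ℝ) = V + 1 := by rw [← hV]; ring
  rw [hV]
  generalize (Polynomial.X : Polynomial ℝ) = U at *
  have h1 : ∑ i ∈ range j, U ^ i * V ^ (j - 1 - i) = U ^ j - V ^ j := by
    have := geom_sum₂_mul U V j
    have h2 : U - V = 1 := by rw [hU]; ring
    rwa [h2, mul_one] at this
  have h1' : ∑ i ∈ range j, V ^ i * U ^ (j - 1 - i) = U ^ j - V ^ j := by
    have := geom_sum₂_mul V U j
    have h2 : V - U = -1 := by rw [hU]; ring
    rw [h2] at this
    linear_combination -this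
  have h3 : ∀ i ∈ range j, (U ^ (i + 1) - V ^ (i + 1)) * (U ^ (j - i) - V ^ (j - i)) =
      (U ^ (j + 1) + V ^ (j + 1)) - U * V * (U ^ i * V ^ (j - 1 - i))
        - U * V * (V ^ i * U ^ (j - 1 - i)) := by
    intro i hi
    rw [Finset.mem_range] at hi
    obtain ⟨r, rfl⟩ : ∃ r, j = i + r + 1 := ⟨j - i - 1, by omega⟩
    have e1 : i + r + 1 - i = r + 1 := by omega
    have e2 : i + r + 1 - 1 - i = r := by omega
    rw [e1, e2]; ring
  rw [Finset.sum_congr rfl h3, Finset.sum_sub_distrib, Finset.sum_sub_distrib, ← Finset.mul_sum,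
    ← Finset.mul_sum, h1, h1']
  simp
  ring

lemma bP_key (j : ℕ) :
    ((j + 1 : ℕ) : Polynomial ℝ) * bP (j + 2) - ∑ i ∈ range j, bP (i + 1) * bP (j - i) =
      Polynomial.derivative (Polynomial.X * (Polynomial.X - 1) * bP (j + 1)) := by
  rw [bP_split_sum, Polynomial.derivative_mul, bP_deriv]
  simp only [Polynomial.derivative_mul, Polynomial.derivative_X, Polynomial.derivative_sub,
    Polynomial.derivative_one, Nat.add_sub_cancel]
  unfold bP
  obtain ⟨V, hV⟩ : ∃ V : Polynomial ℝ, Polynomial.X - 1 = V := ⟨_, rfl⟩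
  have hU : (Polynomial.X : Polynomial ℝ) = V + 1 := by rw [← hV]; ring
  rw [hV]
  simp only [pow_succ, pow_add]
  generalize (Polynomial.X : Polynomial ℝ) ^ j = A
  generalize V ^ j = C
  push_cast
  rw [hU]; ring

section
variable {α : Type*} [Fintype α] [DecidableEq α]

lemma bW_formPerm_mul (l : List α) (hl : l.Nodup) (hne : 1 ≤ l.length) (d : Perm α)
    (hd : ∀ z ∈ l, d z = z) : bW (l.formPerm * d) = bP l.length * bW d := by
  have hdis : Perm.Disjoint l.formPerm d := by
    intro z
    by_cases hz : z ∈ l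
    · right; exact hd z hz
    · left; exact List.formPerm_apply_of_notMem hz
  unfold bW
  rw [hdis.cycleType_mul, Multiset.map_add, Multiset.prod_add]
  congr 1
  rcases Nat.lt_or_ge l.length 2 with h | h
  · have h1 : l.length = 1 := by omega
    rw [(List.formPerm_eq_one_iff l hl).2 (by omega), h1, bP_one]
    simp
  · have hns : ∀ x : α, l ≠ [x] := by rintro x rfl; simp at h
    rw [(List.isCycle_formPerm hl h).cycleType, List.support_formPerm_of_nodup l hl hns]
    simp [List.toFinset_card_of_nodup hl]

lemma formPerm_append_cons (s y : α) (l1 l2 : List α) (h : (s :: l1 ++ y :: l2).Nodup) :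
    (s :: l1 ++ y :: l2).formPerm = swap s y * (s :: l1).formPerm * (y :: l2).formPerm := by
  induction l1 generalizing s with
  | nil => simp
  | cons a l1 ih =>
    have h' := h
    simp only [List.cons_append, List.nodup_cons, List.mem_cons, List.mem_append, not_or] at h'
    have hsa : s ≠ a := h'.1.1
    have hsy : s ≠ y := h'.1.2.2.1
    have hay : a ≠ y := h'.2.1.2.1
    have ih' := ih a (by simpa using (List.nodup_cons.1 h).2)
    simp only [List.cons_append, List.formPerm_cons_cons] at ih' ⊢
    rw [ih']
    have : swap s a * swap a y = swap s y * swap s a := by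
      ext z
      simp only [Perm.mul_apply, swap_apply_def]
      grind
    simp only [← mul_assoc, this]

lemma cyc_decomp (τ : Perm α) (s : α) : ∃ l1 : List α, (s :: l1).Nodup ∧
    (s :: l1).formPerm = τ.cycleOf s ∧
    (∀ z ∈ s :: l1, (τ * (τ.cycleOf s)⁻¹) z = z) ∧ (∀ z ∈ l1, τ z ≠ z) ∧
    τ = (s :: l1).formPerm * (τ * (τ.cycleOf s)⁻¹) := by
  by_cases hs : τ s = s
  · have h1 : τ.cycleOf s = 1 := (Perm.cycleOf_eq_one_iff τ).2 hs
    refine ⟨[], by simp, by simp [h1], by simp [h1, hs], by simp, by simp [h1]⟩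
  · have hmem : τ.cycleOf s ∈ τ.cycleFactorsFinset :=
      Perm.cycleOf_mem_cycleFactorsFinset_iff.2 (by simpa using hs)
    have hdis := Perm.disjoint_mul_inv_of_mem_cycleFactorsFinset hmem
    have hcomm : τ = τ.cycleOf s * (τ * (τ.cycleOf s)⁻¹) := by
      rw [← hdis.commute.eq]; simp
    have hl : ∃ l1, τ.toList s = s :: l1 := by
      unfold Perm.toList
      have : (τ.cycleOf s).support.card ≠ 0 := by
        simpa using hs
      obtain ⟨n, hn⟩ := Nat.exists_eq_succ_of_ne_zero this
      rw [hn]; exact ⟨_, rfl⟩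
    obtain ⟨l1, hl1⟩ := hl
    have hfix : ∀ z ∈ s :: l1, τ.SameCycle s z := by
      intro z hz; rw [← hl1, Perm.mem_toList_iff] at hz; exact hz.1
    refine ⟨l1, ?_, ?_, ?_, ?_, ?_⟩
    · rw [← hl1]; exact Perm.nodup_toList τ s
    · rw [← hl1, Perm.formPerm_toList]
    · intro z hz
      have h1 : z ∈ (τ.cycleOf s).support := (Perm.mem_support_cycleOf_iff' hs).2 (hfix z hz)
      rcases hdis z with h | h
      · exact h
      · exact absurd h (by simpa using h1)
    · intro z hz h
      exact hs (((hfix z (List.mem_cons_of_mem _ hz)).apply_eq_self_iff).2 h)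
    · rw [← hl1, Perm.formPerm_toList]; exact hcomm

/-- Cycle length. -/
def cLen (d : Perm α) (y : α) : ℕ := max 1 (d.cycleOf y).support.card

lemma bW_deriv (d : Perm α) : Polynomial.derivative (bW d) =
    ∑ y, bP (cLen d y - 1) * bW (d * (d.cycleOf y)⁻¹) := by
  have hw : ∀ e : Perm α, bW e = ∏ c ∈ e.cycleFactorsFinset, bP c.support.card := by
    intro e
    simp [bW, Perm.cycleType_def]
  have h0 : ∑ y, bP (cLen d y - 1) * bW (d * (d.cycleOf y)⁻¹) =
      ∑ y ∈ d.support, bP (cLen d y - 1) * bW (d * (d.cycleOf y)⁻¹) := by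
    symm
    apply Finset.sum_subset (Finset.subset_univ _)
    intro y _ hy
    have : d.cycleOf y = 1 := (Perm.cycleOf_eq_one_iff d).2 (by simpa using hy)
    simp [cLen, this, bP_zero]
  rw [h0, ← Finset.sum_fiberwise_of_maps_to (s := d.support) (t := d.cycleFactorsFinset)
    (g := fun y => d.cycleOf y)
    (fun y hy => Perm.cycleOf_mem_cycleFactorsFinset_iff.2 hy), hw, Polynomial.derivative_prod_finset]
  refine Finset.sum_congr rfl fun c hc => ?_
  have hfib : (d.support.filter fun y => d.cycleOf y = c) = c.support := by
    ext y
    simp only [Finset.mem_filter]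
    constructor
    · rintro ⟨hy, rfl⟩
      simpa using hy
    · intro hy
      exact ⟨Perm.mem_cycleFactorsFinset_support_le hc hy,
        (Perm.cycle_is_cycleOf hy hc).symm⟩
  have hcard : 1 ≤ c.support.card := by
    have := (Perm.mem_cycleFactorsFinset_iff.1 hc).1.two_le_card_support
    omega
  have : ∀ y ∈ d.support.filter (fun y => d.cycleOf y = c), 
      bP (cLen d y - 1) * bW (d * (d.cycleOf y)⁻¹) =
      bP (c.support.card - 1) * ∏ c' ∈ d.cycleFactorsFinset.erase c, bP c'.support.card := by
    intro y hy
    have := (Finset.mem_filter.1 hy).2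
    rw [cLen, this, max_eq_right hcard, hw, Perm.cycleFactorsFinset_mul_inv_mem_eq_sdiff hc,
      Finset.sdiff_singleton_eq_erase]
  rw [Finset.sum_congr rfl this, hfib, Finset.sum_const, bP_deriv, nsmul_eq_mul]
  ring

lemma cLen_eq (d : Perm α) (y : α) (l2 : List α) (hn : (y :: l2).Nodup)
    (h : (y :: l2).formPerm = d.cycleOf y) : cLen d y = l2.length + 1 := by
  unfold cLen
  rw [← h]
  rcases l2 with _ | ⟨a, l2⟩
  · simp
  · rw [List.support_formPerm_of_nodup _ hn (by intro x; simp), List.toFinset_card_of_nodup hn]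
    simp

/-- key recursion for the weights -/
lemma bW_rec (τ : Perm α) (s : α) : ∃ (p w1 : Polynomial ℝ),
    (∃ l1 d, τ = (s :: l1).formPerm * d ∧ (s :: l1).Nodup ∧ (∀ z ∈ s :: l1, d z = z) ∧
      w1 = bP (l1.length + 2) * bW d) ∧
    (Fintype.card α : Polynomial ℝ) * w1 - ∑ y ∈ univ.erase s, bW (swap y s * τ) =
      Polynomial.derivative (Polynomial.X * (Polynomial.X - 1) * p) := by
  obtain ⟨l1, hn, hf, hfix, hmv, hτ⟩ := cyc_decomp τ s
  set d := τ * (τ.cycleOf s)⁻¹ with hd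
  refine ⟨bP (l1.length + 1) * bW d, _, ⟨l1, d, hτ, hn, hfix, rfl⟩, ?_⟩
  have hsp : (univ : Finset α).erase s = l1.toFinset ∪ (univ \ (s :: l1).toFinset) := by
    ext y; simp [List.nodup_cons] at hn ⊢; grind
  have hdj : _root_.Disjoint l1.toFinset (univ \ (s :: l1).toFinset) := by
    rw [Finset.disjoint_left]; intro y; simp; grind
  have hS1 : ∑ y ∈ l1.toFinset, bW (swap y s * τ) =
      (∑ i ∈ range l1.length, bP (i + 1) * bP (l1.length - i)) * bW d := by
    rw [List.sum_toFinset _ (List.nodup_cons.1 hn).2, Finset.sum_mul]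
    have : l1.map (fun y => bW (swap y s * τ)) = 
        (List.range l1.length).map fun i => bP (i + 1) * bP (l1.length - i) * bW d := by
      apply List.ext_getElem
      · simp
      · intro i h1 h2
        simp only [List.getElem_map, List.getElem_range]
        have hi : i < l1.length := by simpa using h1
        have hl : l1 = l1.take i ++ l1[i] :: l1.drop (i + 1) := by
          simp
        have hn2 : (s :: l1.take i ++ l1[i] :: l1.drop (i + 1)).Nodup := by
          rw [List.cons_append, ← hl]; exact hn
        have hF : (s :: l1).formPerm = swap s l1[i] * (s :: l1.take i).formPerm *
            (l1[i] :: l1.drop (i + 1)).formPerm := by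
          rw [← formPerm_append_cons _ _ _ _ hn2, List.cons_append, ← hl]
        have hmem : ∀ z, z ∈ s :: l1.take i ++ l1[i] :: l1.drop (i + 1) → z ∈ s :: l1 := by
          intro z hz
          rwa [List.cons_append, ← hl] at hz
        have e : swap l1[i] s * τ = (s :: l1.take i).formPerm *
            ((l1[i] :: l1.drop (i + 1)).formPerm * d) := by
          rw [hτ, hF, swap_comm]
          simp only [← mul_assoc, swap_mul_self, one_mul]
        have hn3 := List.nodup_append.1 hn2
        rw [e, bW_formPerm_mul _ hn3.1 (by simp), bW_formPerm_mul _ hn3.2.1 (by simp; omega)]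
        · simp only [List.length_cons, List.length_take, List.length_drop]
          rw [min_eq_left hi.le, show l1.length - (i + 1) + 1 = l1.length - i by omega, mul_assoc]
        · intro z hz
          exact hfix z (hmem z (List.mem_append_right _ hz))
        · intro z hz
          rw [Perm.mul_apply, hfix z (hmem z (List.mem_append_left _ hz))]
          apply List.formPerm_apply_of_notMem
          intro hz'
          exact hn3.2.2 z hz z hz' rfl
    rw [this]; rfl
  have hS2 : ∀ y ∈ univ \ (s :: l1).toFinset,
      bP (l1.length + 2) * bW d - bW (swap y s * τ) =
      Polynomial.X * (Polynomial.X - 1) * bP (l1.length + 1) *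
        (bP (cLen d y - 1) * bW (d * (d.cycleOf y)⁻¹)) := by
    intro y hy
    have hy' : y ∉ s :: l1 := by simpa using hy
    obtain ⟨l2, hn2, hf2, hfix2, hmv2, hd2⟩ := cyc_decomp d y
    rw [cLen_eq d y l2 hn2 hf2, Nat.add_sub_cancel]
    set d' := d * (d.cycleOf y)⁻¹ with hd'
    have hnd : (s :: l1 ++ y :: l2).Nodup := by
      rw [List.nodup_append]
      refine ⟨hn, hn2, ?_⟩
      rintro a ha b hb rfl
      rcases List.mem_cons.1 hb with rfl | hb
      · exact hy' ha
      · exact hmv2 a hb (hfix a ha)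
    have hfix3 : ∀ z ∈ s :: l1, d' z = z := by
      intro z hz
      have h1 : (y :: l2).formPerm z = z := by
        apply List.formPerm_apply_of_notMem
        intro hz'
        exact (List.nodup_append.1 hnd).2.2 z hz z hz' rfl
      rw [hd', ← hf2, Perm.mul_apply, Perm.inv_eq_iff_eq.2 h1.symm]
      exact hfix z hz
    have e : swap y s * τ = (s :: l1 ++ y :: l2).formPerm * d' := by
      rw [formPerm_append_cons _ _ _ _ hnd, hτ]
      conv_lhs => rw [hd2]
      rw [swap_comm]; simp only [mul_assoc]
    rw [e, bW_formPerm_mul _ hnd (by simp)]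
    · have e2 : bW d = bP (l2.length + 1) * bW d' := by
        conv_lhs => rw [hd2]
        rw [bW_formPerm_mul _ hn2 (by simp) _ hfix2]; simp
      rw [e2]
      have := bP_merge (l1.length + 1) l2.length
      simp only [List.length_append, List.length_cons]
      linear_combination (bW d') * this
    · intro z hz
      rcases List.mem_append.1 hz with h | h
      · exact hfix3 z h
      · exact hfix2 z h
  have hS3 : ∑ y ∈ univ \ (s :: l1).toFinset, bP (cLen d y - 1) * bW (d * (d.cycleOf y)⁻¹) =
      Polynomial.derivative (bW d) := by
    rw [bW_deriv]
    apply Finset.sum_subset (Finset.subset_univ _)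
    intro y _ hy
    have : d.cycleOf y = 1 := (Perm.cycleOf_eq_one_iff d).2 (hfix y (by simp at hy ⊢; tauto))
    simp [cLen, this, bP_zero]
  have hS4 := Finset.sum_congr rfl hS2
  rw [← Finset.mul_sum, hS3, Finset.sum_sub_distrib, Finset.sum_const, nsmul_eq_mul] at hS4
  have hc : (Fintype.card α : Polynomial ℝ) =
      ((univ \ (s :: l1).toFinset).card : Polynomial ℝ) + ((l1.length + 1 : ℕ) : Polynomial ℝ) := by
    have h := Finset.card_sdiff_add_card_eq_card (Finset.subset_univ (s :: l1).toFinset)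
    rw [List.toFinset_card_of_nodup hn, Finset.card_univ, List.length_cons] at h
    rw [← h]; push_cast; ring
  rw [hsp, Finset.sum_union hdj, hS1, hc,
    show Polynomial.X * (Polynomial.X - 1) * (bP (l1.length + 1) * bW d) =
      (Polynomial.X * (Polynomial.X - 1) * bP (l1.length + 1)) * bW d by ring,
    Polynomial.derivative_mul (f := Polynomial.X * (Polynomial.X - 1) * bP (l1.length + 1))]
  have := bP_key l1.length
  linear_combination hS4 + (bW d) * this

end

/-- The number of pairs of full cycles. -/
noncomputable def bN {α : Type*} (σ : Perm α) : ℕ :=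
  Nat.card {γ : Perm α // FullC γ ∧ FullC (γ * σ)}

lemma FullC_option {α : Type*} [DecidableEq α] (e : Perm α) (y : α) :
    FullC (optionCongr e * swap none (some y)) ↔ FullC e := by
  have e1 : (optionCongr e * swap none (some y)) none = some (e y) := by simp
  have e2 : (optionCongr e * swap none (some y)) (some y) = none := by simp
  have e3 : ∀ z, z ≠ y → (optionCongr e * swap none (some y)) (some z) = some (e z) := by
    intro z hz
    rw [Perm.mul_apply, swap_apply_of_ne_of_ne (by simp) (by simpa using hz)]; simp
  constructor
  · intro h p hp ⟨x, hx⟩ z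
    have := h (fun o => o.elim (p y) p) ?_ ⟨some x, hx⟩ (some z)
    · exact this
    · rintro (_ | w) hw
      · rw [e1]; exact hp _ hw
      · by_cases hwy : w = y
        · subst hwy; rw [e2]; exact hw
        · rw [e3 w hwy]; exact hp _ hw
  · intro h p hp hx
    have hyy : p (some y) → p (some (e y)) := fun hy => by
      have h1 := hp _ hy
      rw [e2] at h1
      have h2 := hp _ h1
      rwa [e1] at h2
    have hall : ∀ z, p (some z) := by
      apply h (fun z => p (some z))
      · intro z hz
        by_cases hzy : z = y
        · subst hzy; exact hyy hz
        · have := hp _ hz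
          rwa [e3 z hzy] at this
      · obtain ⟨_ | x, hx⟩ := hx
        · have := hp _ hx
          rw [e1] at this
          exact ⟨_, this⟩
        · exact ⟨x, hx⟩
    rintro (_ | z)
    · have := hp _ (hall y)
      rwa [e2] at this
    · exact hall z

lemma not_FullC_option {α : Type*} [Nonempty α] (e : Perm α) :
    ¬ FullC (optionCongr e) := by
  intro h
  have := h (fun o => o = none) (by rintro x rfl; simp) ⟨none, rfl⟩
    (some (Classical.arbitrary α))
  simp at this

lemma oc_mul {α : Type*} (e f : Perm α) : optionCongr (e * f) = optionCongr e * optionCongr f := by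
  ext1 x
  cases x <;> simp

lemma swap_oc {α : Type*} [DecidableEq α] (τ : Perm α) (y : α) :
    swap none (some y) * optionCongr τ = optionCongr τ * swap none (some (τ⁻¹ y)) := by
  rw [mul_swap_eq_swap_mul]; simp

/-- Right decomposition of permutations of `Option`. -/
def rdec {α : Type*} [DecidableEq α] : Option α × Perm α ≃ Perm (Option α) :=
  ((Equiv.refl (Option α)).prodCongr (Equiv.inv (Perm α))).trans
    (Perm.decomposeOption.symm.trans (Equiv.inv _))

lemma rdec_apply {α : Type*} [DecidableEq α] (o : Option α) (e : Perm α) :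
    rdec (o, e) = optionCongr e * swap none o := by
  simp [rdec]
  ext1 x; cases x <;> rfl

section
variable {α : Type*} [Fintype α] [DecidableEq α] [Nonempty α]

open Classical in
lemma card_rdec (Q : Perm (Option α) → Prop) :
    Nat.card {γ : Perm (Option α) // FullC γ ∧ Q γ} =
      ∑ y : α, Nat.card {e : Perm α // FullC e ∧ Q (optionCongr e * swap none (some y))} := by
  simp only [Nat.card_eq_fintype_card, Fintype.card_subtype, Finset.card_filter]
  rw [← Equiv.sum_comp rdec, Fintype.sum_prod_type, Fintype.sum_option]
  simp only [rdec_apply, FullC_option]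
  have : ∀ e : Perm α, ¬ FullC (optionCongr e * swap none none) := by
    intro e; rw [swap_self]; exact not_FullC_option e
  simp only [this, false_and, if_false, Finset.sum_const_zero, zero_add]

lemma bN_fix (τ : Perm α) : bN (optionCongr τ) = Fintype.card α * bN τ := by
  unfold bN
  rw [card_rdec]
  have : ∀ (y : α) (e : Perm α), FullC (optionCongr e * swap none (some y) * optionCongr τ) ↔
      FullC (e * τ) := by
    intro y e
    rw [mul_assoc, swap_oc, ← mul_assoc, ← oc_mul, FullC_option]
  simp [this]

lemma bN_move (τ : Perm α) (s : α) : bN (swap none (some s) * optionCongr τ) =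
    ∑ y ∈ univ.erase s, bN (swap y s * τ) := by
  unfold bN
  rw [card_rdec, ← Finset.add_sum_erase _ _ (Finset.mem_univ s)]
  have h1 : ∀ e : Perm α, ¬ FullC (optionCongr e * swap none (some s) *
      (swap none (some s) * optionCongr τ)) := by
    intro e
    rw [mul_assoc, swap_mul_self_mul, ← oc_mul]
    exact not_FullC_option _
  have h2 : ∀ y ∈ univ.erase s, ∀ e : Perm α, FullC (optionCongr e * swap none (some y) *
      (swap none (some s) * optionCongr τ)) ↔ FullC (e * (swap y s * τ)) := by
    intro y hy e
    have hys : y ≠ s := Finset.ne_of_mem_erase hy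
    have : swap none (some y) * swap none (some s) =
        optionCongr (swap y s) * swap none (some y) := by
      rw [optionCongr_swap]
      ext1 z
      simp only [Perm.mul_apply, swap_apply_def]
      grind
    rw [mul_assoc, ← mul_assoc (swap none (some y)), this, mul_assoc, swap_oc, ← mul_assoc,
      ← mul_assoc, ← oc_mul, ← oc_mul, FullC_option, mul_assoc]
  simp only [h1, and_false]
  rw [Finset.sum_congr rfl fun y hy => by
    rw [show {e : Perm α // FullC e ∧ FullC (optionCongr e * swap none (some y) *
      (swap none (some s) * optionCongr τ))} =
        {e : Perm α // FullC e ∧ FullC (e * (swap y s * τ))} by simp only [h2 y hy]]]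
  simp

lemma card_Full_option : Nat.card {γ : Perm (Option α) // FullC γ} =
    Fintype.card α * Nat.card {γ : Perm α // FullC γ} := by
  have := card_rdec (α := α) (fun _ => True)
  simpa using this

end

section
variable {α : Type*} [Fintype α] [DecidableEq α]

lemma bW_oc (τ : Perm α) : bW (optionCongr τ) = bW τ := by
  unfold bW
  have : optionCongr τ = τ.extendDomain (Equiv.optionIsSomeEquiv α).symm := by
    ext1 x
    cases x with
    | none => rw [Perm.extendDomain_apply_not_subtype _ _ (by simp)]; simp
    | some x =>
      rw [Perm.extendDomain_apply_subtype _ _ (by simp)]; simp [Equiv.optionIsSomeEquiv]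
  rw [this, Perm.cycleType_extendDomain]

lemma bW_congr {β : Type*} [Fintype β] [DecidableEq β] (f : α ≃ β) (τ : Perm α) :
    bW (f.permCongr τ) = bW τ := by
  unfold bW
  have : f.permCongr τ = τ.extendDomain
      (f.trans (Equiv.subtypeUnivEquiv (p := fun _ : β => True) (fun _ => trivial)).symm) := by
    ext1 x
    rw [Perm.extendDomain_apply_subtype _ _ trivial]; simp
  rw [this, Perm.cycleType_extendDomain]

lemma oc_formPerm (l : List α) : optionCongr l.formPerm = (l.map some).formPerm := by
  induction l with
  | nil => simp
  | cons a l ih =>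
    cases l with
    | nil => simp
    | cons b l => 
      simp only [List.formPerm_cons_cons, List.map_cons, oc_mul, optionCongr_swap] at ih ⊢
      rw [ih]

lemma bW_move_int (τ : Perm α) (s : α) :
    (Fintype.card α : ℝ) * ∫ x in (0:ℝ)..1, (bW (swap none (some s) * optionCongr τ)).eval x =
      ∑ y ∈ univ.erase s, ∫ x in (0:ℝ)..1, (bW (swap y s * τ)).eval x := by
  obtain ⟨p, w1, ⟨l1, d, hτ, hn, hfix, rfl⟩, h⟩ := bW_rec τ s
  have hw : bW (swap none (some s) * optionCongr τ) = bP (l1.length + 2) * bW d := by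
    rw [hτ, oc_mul, oc_formPerm, ← mul_assoc, List.map_cons, ← List.formPerm_cons_cons,
      ← List.map_cons, bW_formPerm_mul, bW_oc]
    · simp
    · rw [List.nodup_cons]
      exact ⟨by simp, hn.map (Option.some_injective _)⟩
    · simp
    · intro z hz
      cases z with
      | none => simp
      | some z => 
        have : z ∈ s :: l1 := by simpa using hz
        simp [hfix z this]
  rw [← hw] at h
  have hi : ∀ q : Polynomial ℝ, IntervalIntegrable (fun x => q.eval x) MeasureTheory.volume 0 1 :=
    fun q => q.continuous.intervalIntegrable _ _
  have h3 : ∫ x in (0:ℝ)..1, (Polynomial.derivative 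
      (Polynomial.X * (Polynomial.X - 1) * p)).eval x = 0 := by
    rw [intervalIntegral.integral_eq_sub_of_hasDerivAt
      (fun x _ => Polynomial.hasDerivAt _ x) (hi _)]
    simp
  rw [← h] at h3
  simp only [Polynomial.eval_sub, Polynomial.eval_mul, Polynomial.eval_natCast,
    Polynomial.eval_finsetSum] at h3
  rw [intervalIntegral.integral_sub, intervalIntegral.integral_const_mul,
    intervalIntegral.integral_finsetSum (fun i _ => hi _)] at h3
  · linarith
  · exact (hi _).const_mul _
  · exact (continuous_finsetSum _ fun i _ => Polynomial.continuous _).intervalIntegrable _ _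

end

lemma FullC_congr {α β : Type*} (f : α ≃ β) (γ : Perm α) : 
    FullC (f.permCongr γ) ↔ FullC γ := by
  constructor
  · intro h p hp ⟨x, hx⟩ z
    have := h (fun b => p (f.symm b)) (by intro b hb; simpa using hp _ hb) ⟨f x, by simpa⟩ (f z)
    simpa using this
  · intro h p hp ⟨x, hx⟩ z
    have := h (fun b => p (f b)) (by intro b hb; simpa using hp _ hb) ⟨f.symm x, by simpa⟩ 
      (f.symm z)
    simpa using this

lemma bN_congr {α β : Type*} (f : α ≃ β) (σ : Perm α) : bN (f.permCongr σ) = bN σ := by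
  unfold bN
  refine (Nat.card_congr (Equiv.subtypeEquiv f.permCongr fun γ => ?_)).symm
  have : f.permCongr γ * f.permCongr σ = f.permCongr (γ * σ) := by
    ext; simp
  rw [this, FullC_congr, FullC_congr]

lemma FullC_subsingleton {α : Type*} [Subsingleton α] (γ : Perm α) : FullC γ := by
  rintro p _ ⟨x, hx⟩ z
  rwa [Subsingleton.elim z x]

theorem boccara (n : ℕ) (σ : Perm (Fin (n + 1))) :
    (bN σ : ℝ) = n.factorial * ∫ x in (0:ℝ)..1, (bW σ).eval x := by
  induction n with
  | zero =>
    have h1 : σ = 1 := by ext x; omega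
    subst h1
    have : bN (1 : Perm (Fin (0 + 1))) = 1 := by
      unfold bN
      simp [FullC_subsingleton]
    rw [this]; simp [bW]
  | succ n ih =>
    rw [← bN_congr (finSuccEquiv (n + 1)), ← bW_congr (finSuccEquiv (n + 1))]
    generalize (finSuccEquiv (n + 1)).permCongr σ = ρ
    have hρ : ρ = swap none (ρ none) * optionCongr (removeNone ρ) := by simp
    rcases h : ρ none with _ | s
    · rw [h, swap_self] at hρ
      have hρ' : ρ = optionCongr (removeNone ρ) := hρ
      rw [hρ', bN_fix, bW_oc, Nat.cast_mul, ih, Nat.factorial_succ]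
      simp; ring
    · rw [h] at hρ
      rw [hρ, bN_move, Nat.cast_sum, Finset.sum_congr rfl fun y _ => ih _, ← Finset.mul_sum,
        ← bW_move_int, Nat.factorial_succ]
      simp; ring

lemma card_Full (n : ℕ) : Nat.card {γ : Perm (Fin (n + 1)) // FullC γ} = n.factorial := by
  induction n with
  | zero => simp [FullC_subsingleton]
  | succ n ih =>
    rw [Nat.card_congr (Equiv.subtypeEquiv (finSuccEquiv (n + 1)).permCongr
      fun γ => (FullC_congr _ _).symm), card_Full_option, ih, Nat.factorial_succ]
    simp

lemma isNCycle_iff_s19 {n : ℕ} (hn : 2 ≤ n) (γ : Perm (Fin n)) : IsNCycle γ ↔ FullC γ := by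
  constructor
  · rintro ⟨hc, hs⟩ p hp ⟨x, hx⟩ z
    have hne : ∀ x, γ x ≠ x := fun x => by
      rw [← Perm.mem_support, hs]; simp
    obtain ⟨i, hi⟩ := (hc.sameCycle (hne x) (hne z)).exists_nat_pow_eq
    rw [← hi]
    clear hi
    induction i with
    | zero => simpa
    | succ i ih => rw [pow_succ', Perm.mul_apply]; exact hp _ ih
  · intro h
    have hne : ∀ x, γ x ≠ x := by
      intro x hx
      have h1 := h (fun z => z = x) (by rintro z rfl; exact hx) ⟨x, rfl⟩
      have h2 := h1 ⟨0, by omega⟩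
      have h3 := h1 ⟨1, by omega⟩
      rw [← h3] at h2
      simp at h2
    refine ⟨⟨⟨0, by omega⟩, hne _, fun y _ => ?_⟩, ?_⟩
    · exact h (fun z => γ.SameCycle _ z) (fun z hz => Perm.sameCycle_apply_right.2 hz)
        ⟨_, Perm.SameCycle.refl _ _⟩ y
    · ext x; simpa using hne x

/-- Harer–Zagier count for the one-vertex graph with `2g` loops: fix the loop structure as a
fixed-point-free involution `ι` on the `4g` half-edges.  An embedding is a cyclic order of the
half-edges, i.e. a full cycle `γ`; there are `(4g-1)!` of them.  The faces are the cycles of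
`γ∘ι`, so one-faced embeddings are those with `γ∘ι` a full cycle; their number is
`(4g-1)!/(2g+1)`. -/
theorem one_vertex_graph_one_faced_embeddings (g : ℕ) (hg : 1 ≤ g)
    (ι : Equiv.Perm (Fin (4 * g))) (hinv : ι * ι = 1) (hfree : ∀ x, ι x ≠ x) :
    Nat.card {γ : Equiv.Perm (Fin (4 * g)) // IsNCycle γ} = (4 * g - 1).factorial
    ∧ Nat.card {γ : Equiv.Perm (Fin (4 * g)) // IsNCycle γ ∧ IsNCycle (γ * ι)} * (2 * g + 1)
        = (4 * g - 1).factorial := by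
  simp only [isNCycle_iff_s19 (show 2 ≤ 4 * g by omega)]
  have hW : bW ι = (bP 2) ^ (2 * g) := by
    have hct := Perm.cycleType_of_pow_prime_eq_one (σ := ι) (p := 2) (by rw [pow_two, hinv])
    have hs : ι.support = univ := by ext x; simpa using hfree x
    have hsum := ι.sum_cycleType
    rw [hs, hct] at hsum
    simp at hsum
    rw [bW, hct, Multiset.map_replicate, Multiset.prod_replicate]
    congr 1
    omega
  have hint : ∫ x in (0:ℝ)..1, (bW ι).eval x = 1 / (2 * g + 1) := by
    have h1 : ∀ x : ℝ, (bW ι).eval x = (2 * x - 1) ^ (2 * g) := by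
      intro x
      rw [hW]; simp only [bP, Polynomial.eval_pow, Polynomial.eval_sub, Polynomial.eval_X,
        Polynomial.eval_one]
      congr 1; ring
    simp only [h1]
    rw [intervalIntegral.integral_comp_mul_sub (fun x => x ^ (2 * g)) (by norm_num : (2:ℝ) ≠ 0),
      integral_pow]
    have : (2 * 0 - 1 : ℝ) ^ (2 * g + 1) = -1 := by
      rw [show (2 * 0 - 1 : ℝ) = -1 by norm_num]
      exact Odd.neg_one_pow ⟨g, rfl⟩
    rw [this]
    norm_num
    have : (2 * (g : ℝ) + 1) ≠ 0 := by positivity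
    field_simp
  clear hW hfree hinv
  change _ ∧ bN ι * _ = _
  obtain ⟨n, hn⟩ : ∃ n, 4 * g = n + 1 := ⟨4 * g - 1, by omega⟩
  revert ι
  rw [hn]
  intro ι hint
  refine ⟨card_Full n, ?_⟩
  have h := boccara n ι
  rw [hint] at h
  have h2 : (2 * (g : ℝ) + 1) ≠ 0 := by positivity
  have h3 : (bN ι : ℝ) * (2 * g + 1) = n.factorial := by
    rw [h]; field_simp
  rw [Nat.add_sub_cancel]
  exact_mod_cast h3
end
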